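/- Let Re_m > 0 and R_H be real numbers, let n = (0,1,0), u = (1,0,0), B = (0,1,0) in ℝ³, and let E ∈ ℝ³ satisfy E × n = 0. If j ∈ ℝ³ satisfies the generalised Ohm's law Re_m⁻¹ j = E + u × B − R_H (j × B), then j × n = (Re_m⁻¹ + Re_m R_H²)⁻¹ · ((Re_m R_H, 0, 1) × n). -/

import Mathlib

open Matrix

/-!
Crossing Ohm's law `σ j = E + u × B - r (j × B)` with the magnetic field `B`, which is normal to
the lid, eliminates `E` and leaves a linear equation between `j × B` and `(j × B) × B`. Crossing
once more gives a second one, because `· × B` squares to `-|B|²` on vectors orthogonal to `B`.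
Eliminating `(j × B) × B` inverts `σ + r J` with `J² = -|B|²`, whence the factor `σ² + r² |B|²`.
With `σ = Re_m⁻¹` and `r = R_H` this factor is `σ` times the denominator in the theorem.
-/

section CommRing

variable {R : Type*} [CommRing R]

theorem cross_cross_cross_self (v w : Fin 3 → R) :
    v ⨯₃ w ⨯₃ w ⨯₃ w = -((w ⬝ᵥ w) • v ⨯₃ w) := by
  simp only [cross_cross_eq_smul_sub_smul v w w, map_sub, map_smul, LinearMap.sub_apply,
    LinearMap.smul_apply, cross_self, smul_zero, zero_sub]

theorem smul_cross_eq_of_ohm_law {σ r : R} {E u B j : Fin 3 → R} (hE : E ⨯₃ B = 0)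
    (hOhm : σ • j = E + u ⨯₃ B - r • j ⨯₃ B) :
    (σ ^ 2 + r ^ 2 * (B ⬝ᵥ B)) • j ⨯₃ B = (σ • u ⨯₃ B + (r * (B ⬝ᵥ B)) • u) ⨯₃ B := by
  have hcross : σ • j ⨯₃ B = u ⨯₃ B ⨯₃ B - r • j ⨯₃ B ⨯₃ B := by
    simpa only [map_add, map_sub, map_smul, LinearMap.add_apply, LinearMap.sub_apply,
      LinearMap.smul_apply, hE, zero_add] using congrArg (· ⨯₃ B) hOhm
  have hcross_cross :
      σ • j ⨯₃ B ⨯₃ B = -((B ⬝ᵥ B) • u ⨯₃ B) + (r * (B ⬝ᵥ B)) • j ⨯₃ B := by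
    simpa only [map_sub, map_smul, LinearMap.sub_apply, LinearMap.smul_apply,
      cross_cross_cross_self, smul_neg, sub_neg_eq_add, mul_smul]
      using congrArg (· ⨯₃ B) hcross
  simp only [map_add, map_smul, LinearMap.add_apply, LinearMap.smul_apply]
  linear_combination (norm := module) σ • hcross - r • hcross_cross

end CommRing

theorem stmt_1_general {K : Type*} [Field K] {Re_m R_H : K} {E u B j : Fin 3 → K}
    (hRe : Re_m ≠ 0) (hD : Re_m⁻¹ + Re_m * R_H ^ 2 * (B ⬝ᵥ B) ≠ 0) (hE : E ⨯₃ B = 0)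
    (hOhm : Re_m⁻¹ • j = E + u ⨯₃ B - R_H • j ⨯₃ B) :
    j ⨯₃ B = (Re_m⁻¹ + Re_m * R_H ^ 2 * (B ⬝ᵥ B))⁻¹ •
      (u ⨯₃ B + (Re_m * R_H * (B ⬝ᵥ B)) • u) ⨯₃ B := by
  rw [eq_inv_smul_iff₀ hD]
  calc (Re_m⁻¹ + Re_m * R_H ^ 2 * (B ⬝ᵥ B)) • j ⨯₃ B
      = Re_m • (Re_m⁻¹ ^ 2 + R_H ^ 2 * (B ⬝ᵥ B)) • j ⨯₃ B := by
        rw [smul_smul]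
        congr 1
        field_simp
    _ = Re_m • (Re_m⁻¹ • u ⨯₃ B + (R_H * (B ⬝ᵥ B)) • u) ⨯₃ B := by
        rw [smul_cross_eq_of_ohm_law hE hOhm]
    _ = (u ⨯₃ B + (Re_m * R_H * (B ⬝ᵥ B)) • u) ⨯₃ B := by
        rw [← LinearMap.smul_apply, ← map_smul, smul_add, smul_inv_smul₀ hRe, smul_smul,
          mul_assoc]

/-- Compatible boundary condition for the current density on the moving lid of the
3D lid-driven cavity problem for the Hall MHD equations. -/
theorem stmt_1 (Re_m R_H : ℝ) (hRe : 0 < Re_m)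
    (E j : Fin 3 → ℝ)
    (hEn : crossProduct E ![0, 1, 0] = 0)
    (hOhm : Re_m⁻¹ • j =
      E + crossProduct ![(1:ℝ), 0, 0] ![(0:ℝ), 1, 0]
        - R_H • crossProduct j ![0, 1, 0]) :
    crossProduct j ![0, 1, 0] =
      (Re_m⁻¹ + Re_m * R_H ^ 2)⁻¹ •
        crossProduct ![Re_m * R_H, 0, 1] ![0, 1, 0] := by
  have hB : ![0, 1, 0] ⬝ᵥ ![0, 1, 0] = (1 : ℝ) := by simp
  have hD : Re_m⁻¹ + Re_m * R_H ^ 2 * (![0, 1, 0] ⬝ᵥ ![0, 1, 0]) ≠ 0 := by rw [hB]; positivity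
  simpa [cross_apply] using stmt_1_general hRe.ne' hD hEn hOhm
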